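/- arXiv:0804.3579 — 3 statements merged into one kernel-verified Lean document; each statement's English description precedes it below -/
import Mathlib

section
/- Let G be a group (written multiplicatively), let k ≥ 1 and 1 ≤ m ≤ k be integers, and for each n ∈ ℕ let f_n : G^{k+1} → G and g_n : G^m → G, and let h : G^{k+1-m} → G. Assume the semiconjugate functional equation holds: for every n ∈ ℕ and all u_0, …, u_k ∈ G, f_n(u_0,…,u_k) * h(u_0,…,u_{k-m}) = g_n(u_0 * h(u_1,…,u_{k+1-m}), u_1 * h(u_2,…,u_{k+2-m}), …, u_{m-1} * h(u_m,…,u_k)). Suppose (t_n)_{n ≥ -(m-1)} is a sequence in G satisfying t_{n+1} = g_n(t_n, …, t_{n-m+1}) for all n ≥ 0, and (x_n)_{n ≥ -k} is a sequence in G satisfying x_{n+1} = t_{n+1} * h(x_n, …, x_{n-(k-m)})^{-1} for all n ≥ 0 together with the initial consistency conditions t_{-j} = x_{-j} * h(x_{-j-1}, …, x_{-j-(k+1-m)}) for j = 0, 1, …, m-1. Then (x_n) is a solution of the original equation: x_{n+1} = f_n(x_n, x_{n-1}, …, x_{n-k}) for all n ≥ 0. -/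
/-!
Attach to a sequence `x` the sequence `y_z = x_z * h(x_{z-1}, x_{z-2}, …)`. The semiconjugate
functional equation, evaluated along `x`, says after right cancellation that `x` solves the original
equation if and only if `y` solves the factor equation. The cofactor equation says `t_z = y_z` for
`z ≥ 1` and the consistency conditions say the same for `-m < z ≤ 0`; so `y` inherits the factor
equation from `t`.
-/

section Recurrence

variable {G : Type*} {d : ℕ}

/-- The argument `(x_z, x_{z-1}, …, x_{z-d+1})` of a difference equation of order `d`: the `d` most
recent values of a sequence at time `z`, latest first. Sequences are indexed by all of `ℤ`, although
only a left-bounded range of indices is relevant. -/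
def pastValues (x : ℤ → G) (d : ℕ) (z : ℤ) : Fin d → G :=
  fun i ↦ x (z - i.val)

/-- The sequence `x` solves the difference equation `x_{n+1} = f_n(x_n, …, x_{n-d+1})` of order `d`
for all `n ≥ 0`. Only the values of `x` at indices greater than `-d` matter. -/
def SolvesRecurrence (f : ℕ → (Fin d → G) → G) (x : ℤ → G) : Prop :=
  ∀ n : ℕ, x ((n : ℤ) + 1) = f n (pastValues x d n)

theorem SolvesRecurrence.congr {f : ℕ → (Fin d → G) → G} {x y : ℤ → G}
    (hx : SolvesRecurrence f x) (hxy : Set.EqOn x y (Set.Ioi (-(d : ℤ)))) :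
    SolvesRecurrence f y := by
  intro n
  have h_next : x ((n : ℤ) + 1) = y ((n : ℤ) + 1) := hxy (by simp only [Set.mem_Ioi]; lia)
  have h_past : pastValues x d n = pastValues y d n :=
    funext fun i ↦ hxy (by have := i.isLt; simp only [Set.mem_Ioi]; lia)
  rw [← h_next, ← h_past]
  exact hx n

end Recurrence

section Semiconjugacy

variable {G : Type*} {d m r : ℕ}

/-- The semiconjugate functional equation: `h` and `g` factor the difference equation of order `d`
given by `f` into a factor equation of order `m` and a cofactor equation of order `r`.
In the paper's notation `d = k + 1` and `r = k + 1 - m`. -/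
def IsSemiconjugateFactorization [Mul G] (hd : m + r ≤ d) (f : ℕ → (Fin d → G) → G)
    (g : ℕ → (Fin m → G) → G) (h : (Fin r → G) → G) : Prop :=
  ∀ (n : ℕ) (u : Fin d → G),
    f n u * h (fun i ↦ u ⟨i.val, by lia⟩) =
      g n (fun j ↦ u ⟨j.val, by lia⟩ * h (fun i ↦ u ⟨j.val + 1 + i.val, by lia⟩))

/-- The sequence `x_z * h(x_{z-1}, …, x_{z-r})`, which is the candidate solution of the factor
equation attached to a sequence `x`. -/
def factorSeq [Mul G] (h : (Fin r → G) → G) (x : ℤ → G) : ℤ → G :=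
  fun z ↦ x z * h (pastValues x r (z - 1))

theorem factorSeq_add_one [Mul G] (h : (Fin r → G) → G) (x : ℤ → G) (z : ℤ) :
    factorSeq h x (z + 1) = x (z + 1) * h (pastValues x r z) := by
  rw [factorSeq, add_sub_cancel_right]

theorem IsSemiconjugateFactorization.apply_pastValues [Mul G] {hd : m + r ≤ d}
    {f : ℕ → (Fin d → G) → G} {g : ℕ → (Fin m → G) → G} {h : (Fin r → G) → G}
    (hfac : IsSemiconjugateFactorization hd f g h) (x : ℤ → G) (n : ℕ) :
    f n (pastValues x d n) * h (pastValues x r n) = g n (pastValues (factorSeq h x) m n) := by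
  have h_shift (j : Fin m) :
      (fun i : Fin r ↦ x (n - (j.val + 1 + i.val : ℕ))) = pastValues x r (n - j.val - 1) := by
    funext i
    exact congrArg x (by lia)
  calc f n (pastValues x d n) * h (pastValues x r n)
      = g n (fun j ↦ x (n - j.val) * h (fun i ↦ x (n - (j.val + 1 + i.val : ℕ)))) :=
        hfac n (pastValues x d n)
    _ = g n (pastValues (factorSeq h x) m n) := by simp only [h_shift]; rfl

theorem IsSemiconjugateFactorization.solvesRecurrence_iff [Mul G] [IsRightCancelMul G]
    {hd : m + r ≤ d} {f : ℕ → (Fin d → G) → G} {g : ℕ → (Fin m → G) → G}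
    {h : (Fin r → G) → G} (hfac : IsSemiconjugateFactorization hd f g h) {x : ℤ → G} :
    SolvesRecurrence f x ↔ SolvesRecurrence g (factorSeq h x) :=
  forall_congr' fun n ↦ by
    rw [factorSeq_add_one, ← hfac.apply_pastValues, mul_left_inj]

theorem eqOn_factorSeq_of_solvesRecurrence_cofactor [Group G] {h : (Fin r → G) → G}
    {t x : ℤ → G} (hcofac : SolvesRecurrence (fun n v ↦ t ((n : ℤ) + 1) * (h v)⁻¹) x)
    (hinit : ∀ j : Fin m, t (-(j.val : ℤ)) = factorSeq h x (-(j.val : ℤ))) :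
    Set.EqOn t (factorSeq h x) (Set.Ioi (-(m : ℤ))) := by
  intro z hz
  rw [Set.mem_Ioi] at hz
  rcases le_or_gt z 0 with hz_nonpos | hz_pos
  · obtain ⟨j, rfl⟩ := Int.exists_eq_neg_ofNat hz_nonpos
    exact hinit ⟨j, by lia⟩
  · obtain ⟨n, rfl⟩ : ∃ n : ℕ, z = n + 1 := ⟨(z - 1).toNat, by lia⟩
    rw [factorSeq_add_one, ← eq_mul_inv_iff_mul_eq.mp (hcofac n)]

end Semiconjugacy

/-- Semiconjugate factorization (Theorem 1, converse direction): if `t` solves the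
factor equation, `x` solves the cofactor equation, and the initial consistency
conditions `t_{-j} = x_{-j} * h(x_{-j-1},…,x_{-j-(k+1-m)})` hold for `j = 0,…,m-1`,
then `x` is a solution of the original equation of order `k+1`. -/
theorem stmt_1 {G : Type*} [Group G] (k m : ℕ) (hk : 1 ≤ k) (hm : 1 ≤ m) (hmk : m ≤ k)
    (f : ℕ → (Fin (k + 1) → G) → G) (g : ℕ → (Fin m → G) → G)
    (h : (Fin (k + 1 - m) → G) → G)
    (hsc : ∀ (n : ℕ) (u : Fin (k + 1) → G),
      f n u * h (fun i => u ⟨i.val, by have := i.isLt; omega⟩) =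
        g n (fun j => u ⟨j.val, by have := j.isLt; omega⟩ *
          h (fun i => u ⟨j.val + 1 + i.val, by have := i.isLt; have := j.isLt; omega⟩)))
    (t : ℤ → G) (x : ℤ → G)
    (hfac : ∀ n : ℕ, t ((n : ℤ) + 1) = g n (fun j => t ((n : ℤ) - j.val)))
    (hcofac : ∀ n : ℕ,
      x ((n : ℤ) + 1) = t ((n : ℤ) + 1) * (h (fun i => x ((n : ℤ) - i.val)))⁻¹)
    (hinit : ∀ j : Fin m,
      t (-(j.val : ℤ)) = x (-(j.val : ℤ)) * h (fun i => x (-(j.val : ℤ) - 1 - i.val))) :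
    ∀ n : ℕ, x ((n : ℤ) + 1) = f n (fun i => x ((n : ℤ) - i.val)) := by
  have h_factorization : IsSemiconjugateFactorization (by lia) f g h := hsc
  have h_eqOn : Set.EqOn t (factorSeq h x) (Set.Ioi (-(m : ℤ))) :=
    eqOn_factorSeq_of_solvesRecurrence_cofactor hcofac hinit
  have h_factor : SolvesRecurrence g (factorSeq h x) := SolvesRecurrence.congr hfac h_eqOn
  exact h_factorization.solvesRecurrence_iff.mpr h_factor
end

section
/- Let a be a nonzero real number and let (x_n)_{n ≥ -2} be a real sequence with x_0 ≠ x_{-1} and x_{-2} ≠ x_{-1} satisfying x_{n+1} = x_n + a (x_n - x_{n-1}) / (x_{n-1} - x_{n-2}) for all n ≥ 0. Set t_{-1} := x_{-1} - x_{-2} and t_0 := x_0 - x_{-1}, and let σ := t_{-1} + t_0 + a t_0/t_{-1} + a^2/t_{-1} + a^2/t_0 + a t_{-1}/t_0. Then x_n ≠ x_{n-1} for all n ≥ -1, and for every n ≥ -2, x_{n+6} = x_n + σ. -/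
/-!
The difference sequence `t` of a solution satisfies `t (n + 2) = a * t (n + 1) / t n`. Substituting
this relation into itself gives `t (n + 3) = a ^ 2 / t n`, and `u ↦ a ^ 2 / u` is an involution, so
`t` has period 6. Hence `x (n + 6) - x n` does not depend on `n`, and it telescopes to the sum of
`t` over one period.
-/

open fwdDiff

/-- The factor equation of the third-order equation, with the index shifted so that the initial
values, `t₋₁` and `t₀` in the paper, are `t 0` and `t 1`. -/
def IsFactorSolution {G : Type*} [Mul G] [Div G] (a : G) (t : ℕ → G) : Prop :=
  ∀ n, t (n + 2) = a * t (n + 1) / t n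

namespace IsFactorSolution

section CommGroupWithZero

variable {G : Type*} [CommGroupWithZero G] {a : G} {t : ℕ → G}

theorem ne_zero (h : IsFactorSolution a t) (ha : a ≠ 0) (h₀ : t 0 ≠ 0) (h₁ : t 1 ≠ 0) (n : ℕ) :
    t n ≠ 0 := by
  induction n using Nat.twoStepInduction with
  | zero => exact h₀
  | one => exact h₁
  | more n hn hn' =>
    rw [h n]
    exact div_ne_zero (mul_ne_zero ha hn') hn

theorem apply_add_three (h : IsFactorSolution a t) {n : ℕ} (hn : t (n + 1) ≠ 0) :
    t (n + 3) = a ^ 2 / t n := by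
  rw [h (n + 1), h n]
  field_simp

theorem periodic_six (h : IsFactorSolution a t) (ha : a ≠ 0) (h₀ : t 0 ≠ 0) (h₁ : t 1 ≠ 0) :
    Function.Periodic t 6 := fun n => by
  have ht := h.ne_zero ha h₀ h₁
  rw [h.apply_add_three (n := n + 3) (ht _), h.apply_add_three (ht _),
    div_div_cancel₀ (pow_ne_zero 2 ha)]

end CommGroupWithZero

theorem sum_range_six {K : Type*} [Semifield K] {a : K} {t : ℕ → K} (h : IsFactorSolution a t)
    (ha : a ≠ 0) (h₀ : t 0 ≠ 0) (h₁ : t 1 ≠ 0) :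
    ∑ i ∈ Finset.range 6, t i =
      t 0 + t 1 + a * t 1 / t 0 + a ^ 2 / t 0 + a ^ 2 / t 1 + a * t 0 / t 1 := by
  have ht := h.ne_zero ha h₀ h₁
  have h₂ : t 2 = a * t 1 / t 0 := h 0
  have h₃ : t 3 = a ^ 2 / t 0 := h.apply_add_three h₁
  have h₄ : t 4 = a ^ 2 / t 1 := h.apply_add_three (ht 2)
  have h₅ : t 5 = a * t 0 / t 1 := by
    rw [h.apply_add_three (n := 2) (ht 3), h₂]
    field_simp
  simp only [Finset.sum_range_succ, Finset.sum_range_zero, zero_add, h₂, h₃, h₄, h₅]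

end IsFactorSolution

theorem apply_add_eq_add_sum_of_periodic_fwdDiff {A : Type*} [AddCommGroup A] {y : ℕ → A} {p : ℕ}
    (h : Function.Periodic (Δ_[1] y) p) (n : ℕ) :
    y (n + p) = y n + ∑ i ∈ Finset.range p, Δ_[1] y i := by
  induction n with
  | zero => simp only [fwdDiff, Finset.sum_range_sub, zero_add, add_sub_cancel]
  | succ n ih =>
    have hn : y (n + p + 1) - y (n + p) = y (n + 1) - y n := h n
    rw [add_right_comm, eq_add_of_sub_eq hn, ih]
    abel

theorem isFactorSolution_fwdDiff {K : Type*} [DivisionRing K] {a : K} {y : ℕ → K}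
    (hy : ∀ n, y (n + 3) = y (n + 2) + a * (y (n + 2) - y (n + 1)) / (y (n + 1) - y n)) :
    IsFactorSolution a (Δ_[1] y) :=
  fun n => sub_eq_of_eq_add' (hy n)

theorem stmt_16_general {K : Type*} [Field K] {a : K} (ha : a ≠ 0) {x : ℤ → K}
    (h1 : x 0 ≠ x (-1)) (h2 : x (-2) ≠ x (-1))
    (hx : ∀ n : ℕ, x ((n : ℤ) + 1) =
      x (n : ℤ) + a * (x (n : ℤ) - x ((n : ℤ) - 1)) / (x ((n : ℤ) - 1) - x ((n : ℤ) - 2))) :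
    (∀ n : ℤ, -1 ≤ n → x n ≠ x (n - 1)) ∧
    ∀ n : ℤ, -2 ≤ n →
      x (n + 6) = x n +
        ((x (-1) - x (-2)) + (x 0 - x (-1)) +
          a * (x 0 - x (-1)) / (x (-1) - x (-2)) +
          a ^ 2 / (x (-1) - x (-2)) +
          a ^ 2 / (x 0 - x (-1)) +
          a * (x (-1) - x (-2)) / (x 0 - x (-1))) := by
  let y : ℕ → K := fun k => x (k - 2)
  have y_add (k m : ℕ) : y (k + m) = x (k + (m - 2)) := by
    simp only [y, Nat.cast_add, add_sub_assoc]
  have hfactor : IsFactorSolution a (Δ_[1] y) :=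
    isFactorSolution_fwdDiff fun n => by simpa [y_add, y, ← sub_eq_add_neg] using hx n
  have h₀ : Δ_[1] y 0 ≠ 0 := sub_ne_zero.mpr h2.symm
  have h₁ : Δ_[1] y 1 ≠ 0 := sub_ne_zero.mpr h1
  refine ⟨fun n hn => ?_, fun n hn => ?_⟩
  · obtain ⟨k, rfl⟩ : ∃ k : ℕ, n = k - 1 := ⟨(n + 1).toNat, by omega⟩
    have hk : y (k + 1) ≠ y k := sub_ne_zero.mp (hfactor.ne_zero ha h₀ h₁ k)
    simpa [y_add, y, ← sub_eq_add_neg, sub_sub] using hk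
  · obtain ⟨k, rfl⟩ : ∃ k : ℕ, n = k - 2 := ⟨(n + 2).toNat, by omega⟩
    have hshift : y (k + 6) = y k + ∑ i ∈ Finset.range 6, Δ_[1] y i :=
      apply_add_eq_add_sum_of_periodic_fwdDiff (hfactor.periodic_six ha h₀ h₁) k
    rw [hfactor.sum_range_six ha h₀ h₁, y_add] at hshift
    rw [sub_add_eq_add_sub, add_sub_assoc]
    exact hshift

/-- Example 3: for `x_{n+1} = x_n + a(x_n - x_{n-1})/(x_{n-1} - x_{n-2})` with `a ≠ 0`
and `x_0 ≠ x_{-1}`, `x_{-2} ≠ x_{-1}`, all consecutive differences stay nonzero and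
each solution advances by the constant `σ` (the sum of the six periodic values of the
factor equation) every 6 steps: `x_{n+6} = x_n + σ`. -/
theorem stmt_16 (a : ℝ) (ha : a ≠ 0) (x : ℤ → ℝ)
    (h1 : x 0 ≠ x (-1)) (h2 : x (-2) ≠ x (-1))
    (hx : ∀ n : ℕ, x ((n : ℤ) + 1) =
      x (n : ℤ) + a * (x (n : ℤ) - x ((n : ℤ) - 1)) / (x ((n : ℤ) - 1) - x ((n : ℤ) - 2))) :
    (∀ n : ℤ, -1 ≤ n → x n ≠ x (n - 1)) ∧
    ∀ n : ℤ, -2 ≤ n →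
      x (n + 6) = x n +
        ((x (-1) - x (-2)) + (x 0 - x (-1)) +
          a * (x 0 - x (-1)) / (x (-1) - x (-2)) +
          a ^ 2 / (x (-1) - x (-2)) +
          a ^ 2 / (x 0 - x (-1)) +
          a * (x (-1) - x (-2)) / (x 0 - x (-1))) :=
  stmt_16_general ha h1 h2 hx
end

section
/- Let a ∈ ℝ and let (x_n)_{n ≥ -1} be a sequence with x_{-1}, x_0 > 0 satisfying x_{n+1} = x_{n-1} e^{a - x_n - x_{n-1}} for all n ≥ 0. Then x_n > 0 for all n, and the sequence r_n := x_n e^{x_{n-1}} / x_{n-1} (defined for n ≥ 0) satisfies the first-order factor equation r_{n+1} = e^a / r_n for all n ≥ 0; consequently r_{n+2} = r_n for all n, so every solution of the factor equation is periodic with period at most 2, and the cofactor equation x_{n+1} = r_{n+1} x_n e^{-x_n} implies that for all n ≥ 0: x_{n+1} = (e^a / r_0) x_n e^{-x_n} when n is even, and x_{n+1} = r_0 x_n e^{-x_n} when n is odd. In particular every point (x_n, x_{n+1}) of the orbit lies on the union of the two curves ξ_1(t) = (e^a/r_0) t e^{-t} and ξ_2(t) = r_0 t e^{-t}. -/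
/-!
With `ψ t = e^{-t}` the equation reads `x_{n+1} = e^a ψ(x_n) · x_{n-1} ψ(x_{n-1})`. Dividing it by
`x_n ψ(x_n)` cancels `ψ(x_n)`, so `r_n = x_n / (x_{n-1} ψ(x_{n-1}))` obeys `r_{n+1} = e^a / r_n`.
Thus `r` semiconjugates the planar dynamics to the involution `t ↦ e^a / t`, whose even iterates
are the identity.
-/

open Function Set

section Unfolding

variable {α : Type*} {f : α → α → α}

/-- The unfolding of the second-order equation `x_{n+1} = f x_{n-1} x_n`: the planar map
`(x_{n-1}, x_n) ↦ (x_n, x_{n+1})`. The older term is the first coordinate. -/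
def unfolding (f : α → α → α) (p : α × α) : α × α :=
  (p.2, f p.1 p.2)

lemma iterate_unfolding {x : ℤ → α} (hx : ∀ n : ℕ, x (n + 1) = f (x (n - 1)) (x n)) (n : ℕ) :
    (unfolding f)^[n] (x (-1), x 0) = (x (n - 1), x n) := by
  induction n with
  | zero => simp
  | succ n ih => simp [iterate_succ_apply', ih, unfolding, hx]

lemma mapsTo_unfolding {S : Set α} (hf : ∀ u ∈ S, ∀ v ∈ S, f u v ∈ S) :
    MapsTo (unfolding f) (S ×ˢ S) (S ×ˢ S) :=
  fun p hp ↦ ⟨hp.2, hf p.1 hp.1 p.2 hp.2⟩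

lemma mem_of_recurrence {S : Set α} {x : ℤ → α} (hf : ∀ u ∈ S, ∀ v ∈ S, f u v ∈ S)
    (hx : ∀ n : ℕ, x (n + 1) = f (x (n - 1)) (x n)) (hxm1 : x (-1) ∈ S) (hx0 : x 0 ∈ S)
    {n : ℤ} (hn : -1 ≤ n) : x n ∈ S := by
  obtain ⟨k, rfl⟩ : ∃ k : ℕ, n = k - 1 := ⟨(n + 1).toNat, by omega⟩
  have h : (unfolding f)^[k] (x (-1), x 0) ∈ S ×ˢ S := (mapsTo_unfolding hf).iterate k ⟨hxm1, hx0⟩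
  rw [iterate_unfolding hx] at h
  exact h.1

end Unfolding

section Separable

variable {G : Type*} [CommGroupWithZero G] {b : G} {ψ : G → G}

/-- The unfolding of the separable equation `x_{n+1} = b ψ₀(x_n) ψ₁(x_{n-1})` in the case
`ψ₁ t = t ψ₀ t`, that is, where `c = -1` satisfies `ψ₀(t)^c ψ₁(t) = t^(c²)`; here `ψ = ψ₀`. -/
def separableMap (b : G) (ψ : G → G) : G × G → G × G :=
  unfolding fun u v ↦ b * ψ v * (u * ψ u)

/-- The form symmetry `(u, v) ↦ v h(u)` with `h t = 1 / (t ψ t)`; its value along an orbit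
`(x_{n-1}, x_n)` of `separableMap b ψ` is the factor variable `r_n`. -/
def formSymmetry (ψ : G → G) (p : G × G) : G :=
  p.2 / (p.1 * ψ p.1)

lemma formSymmetry_mul_cancel {p : G × G} (hp : p.1 ≠ 0) (hψ : ψ p.1 ≠ 0) :
    formSymmetry ψ p * (p.1 * ψ p.1) = p.2 :=
  div_mul_cancel₀ _ (mul_ne_zero hp hψ)

lemma semiconj_formSymmetry (hψ : ∀ t, ψ t ≠ 0) :
    Semiconj (formSymmetry ψ) (separableMap b ψ) (b / ·) := by
  intro ⟨u, v⟩
  calc formSymmetry ψ (separableMap b ψ (u, v))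
      = b * ψ v * (u * ψ u) / (v * ψ v) := rfl
    _ = b * (u * ψ u) * ψ v / (v * ψ v) := by rw [mul_right_comm]
    _ = b * (u * ψ u) / v := mul_div_mul_right _ _ (hψ v)
    _ = b / (v / (u * ψ u)) := (div_div_eq_mul_div _ _ _).symm

lemma involutive_const_div (hb : b ≠ 0) : Involutive (b / ·) :=
  fun _ ↦ div_div_cancel₀ hb

lemma formSymmetry_iterate_of_even (hb : b ≠ 0) (hψ : ∀ t, ψ t ≠ 0) {n : ℕ} (hn : Even n)
    (p : G × G) : formSymmetry ψ ((separableMap b ψ)^[n] p) = formSymmetry ψ p := by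
  rw [((semiconj_formSymmetry hψ).iterate_right n).eq, (involutive_const_div hb).iterate_even hn,
    id]

end Separable

lemma formSymmetry_exp_neg (u v : ℝ) :
    formSymmetry (fun t ↦ Real.exp (-t)) (u, v) = v * Real.exp u / u := by
  rw [formSymmetry, Real.exp_neg, ← div_eq_mul_inv, div_div_eq_mul_div]

lemma mul_exp_sub_sub (a u v : ℝ) :
    u * Real.exp (a - v - u) = Real.exp a * Real.exp (-v) * (u * Real.exp (-u)) := by
  rw [sub_eq_add_neg, sub_eq_add_neg, Real.exp_add, Real.exp_add, mul_left_comm]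

/-- Example 4: for `x_{n+1} = x_{n-1} e^{a - x_n - x_{n-1}}` with positive initial
values, the solution stays positive; `r_n = x_n e^{x_{n-1}}/x_{n-1}` satisfies the
factor equation `r_{n+1} = e^a/r_n`, hence is 2-periodic, and the cofactor equation
`x_{n+1} = r_{n+1} x_n e^{-x_n}` shows the orbit alternates between, and hence lies on
the union of, the two curves `ξ₁(t) = (e^a/r_0) t e^{-t}` and `ξ₂(t) = r_0 t e^{-t}`. -/
theorem stmt_17 (a : ℝ) (x : ℤ → ℝ) (hxm1 : 0 < x (-1)) (hx0 : 0 < x 0)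
    (hx : ∀ n : ℕ, x ((n : ℤ) + 1) = x ((n : ℤ) - 1) * Real.exp (a - x (n : ℤ) - x ((n : ℤ) - 1)))
    (r : ℕ → ℝ)
    (hr : ∀ n : ℕ, r n = x (n : ℤ) * Real.exp (x ((n : ℤ) - 1)) / x ((n : ℤ) - 1)) :
    (∀ n : ℤ, -1 ≤ n → 0 < x n) ∧
    (∀ n : ℕ, r (n + 1) = Real.exp a / r n) ∧
    (∀ n : ℕ, r (n + 2) = r n) ∧
    (∀ n : ℕ, x ((n : ℤ) + 1) = r (n + 1) * x (n : ℤ) * Real.exp (-x (n : ℤ))) ∧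
    (∀ n : ℕ, (Even n → x ((n : ℤ) + 1) = (Real.exp a / r 0) * x (n : ℤ) * Real.exp (-x (n : ℤ))) ∧
      (Odd n → x ((n : ℤ) + 1) = r 0 * x (n : ℤ) * Real.exp (-x (n : ℤ)))) ∧
    (∀ n : ℕ, x ((n : ℤ) + 1) = (Real.exp a / r 0) * x (n : ℤ) * Real.exp (-x (n : ℤ)) ∨
      x ((n : ℤ) + 1) = r 0 * x (n : ℤ) * Real.exp (-x (n : ℤ))) := by
  let ψ : ℝ → ℝ := fun t ↦ Real.exp (-t)
  have ha : Real.exp a ≠ 0 := Real.exp_ne_zero a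
  have hψ (t : ℝ) : ψ t ≠ 0 := Real.exp_ne_zero (-t)
  have orbit : ∀ n : ℕ, (separableMap (Real.exp a) ψ)^[n] (x (-1), x 0) = (x (n - 1), x n) :=
    iterate_unfolding fun n ↦ (hx n).trans (mul_exp_sub_sub a _ _)
  have pos {n : ℤ} (hn : -1 ≤ n) : 0 < x n :=
    mem_of_recurrence (f := fun u v ↦ u * Real.exp (a - v - u)) (S := Ioi 0)
      (fun _ hu _ _ ↦ mul_pos hu (Real.exp_pos _)) hx hxm1 hx0 hn
  have r_eq (n : ℕ) : r n = formSymmetry ψ ((separableMap (Real.exp a) ψ)^[n] (x (-1), x 0)) := by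
    rw [orbit, formSymmetry_exp_neg, hr]
  have factor (n : ℕ) : r (n + 1) = Real.exp a / r n := by
    rw [r_eq, r_eq, iterate_succ_apply', (semiconj_formSymmetry hψ).eq]
  have r_even {n : ℕ} (hn : Even n) : r n = r 0 := by
    rw [r_eq, r_eq, formSymmetry_iterate_of_even ha hψ hn, iterate_zero_apply]
  have cofactor (n : ℕ) : x (n + 1) = r (n + 1) * x n * Real.exp (-x n) := by
    have h := formSymmetry_mul_cancel (p := (x n, x (n + 1))) (pos (by omega)).ne' (hψ (x n))
    rw [mul_assoc, r_eq, orbit, Nat.cast_succ, add_sub_cancel_right, h]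
  have even_curve {n : ℕ} (hn : Even n) :
      x (n + 1) = Real.exp a / r 0 * x n * Real.exp (-x n) := by rw [cofactor, factor, r_even hn]
  have odd_curve {n : ℕ} (hn : Odd n) : x (n + 1) = r 0 * x n * Real.exp (-x n) := by
    rw [cofactor, r_even hn.add_one]
  have period (n : ℕ) : r (n + 2) = r n := by rw [factor, factor, div_div_cancel₀ ha]
  exact ⟨fun _ ↦ pos, factor, period, cofactor, fun n ↦ ⟨even_curve, odd_curve⟩,
    fun n ↦ n.even_or_odd.imp even_curve odd_curve⟩
end
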